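/- Let z > 0 and let v (with v_j > 0 for all j, v_1 = 1) satisfy v_i ≥ L_{ij}(z) v_j for all i ≠ j. If the digraph D(v,z) with arcs {(i,j) : v_i = L_{ij}(z) v_j} contains no directed cycle, then there exists a feasible solution v' of the same system for which all inequalities v'_i > L_{ij}(z) v'_j are strict. -/

import Mathlib

/-!
Acyclicity of the binding digraph of a feasible `v` gives a height `h` that strictly drops along
every arc. Pass from `v i` to `(1 + ε * h i) * v i` with `ε > 0`: in a binding constraint
`v i = L i j * v j` the left side then grows strictly more than the right side, because
`h j < h i`, while each of the finitely many other constraints has positive slack and survives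
when `ε` is small. The system is homogeneous, so the normalization is restored by rescaling.
-/

open Function Relation

section SimpleCycle

variable {α β : Type*}

/-- A simple directed cycle `c 0 → c 1 → ⋯ → c (s - 1) → c 0` of the digraph with arc relation `r`,
listed by its pairwise distinct vertices. Indices are added in `Fin s`, hence modulo `s`; the case
`s = 1` is a loop. -/
structure IsSimpleCycle (r : α → α → Prop) {s : ℕ} [NeZero s] (c : Fin s → α) : Prop where
  injective : Injective c
  rel_add_one : ∀ k, r (c k) (c (k + 1))

theorem IsSimpleCycle.two_le {r : α → α → Prop} [Std.Irrefl r] {s : ℕ} [NeZero s] {c : Fin s → α}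
    (hc : IsSimpleCycle r c) : 2 ≤ s := by
  by_contra! hs
  obtain rfl : s = 1 := by have := NeZero.pos s; omega
  exact irrefl_of r (c 0) (hc.rel_add_one 0)

theorem IsSimpleCycle.map {r : α → α → Prop} {r' : β → β → Prop} {s : ℕ} [NeZero s]
    {c : Fin s → α} (hc : IsSimpleCycle r c) {g : α → β} (hg : Injective g)
    (hr : ∀ a b, r a b → r' (g a) (g b)) : IsSimpleCycle r' (g ∘ c) where
  injective := hg.comp hc.injective
  rel_add_one k := hr _ _ (hc.rel_add_one k)

theorem isSimpleCycle_iterate {r : α → α → Prop} {f : α → α} (hf : ∀ x, r x (f x)) (x : α)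
    [NeZero (minimalPeriod f x)] :
    IsSimpleCycle r fun k : Fin (minimalPeriod f x) ↦ f^[k] x where
  injective k l hkl := Fin.ext (iterate_injOn_Iio_minimalPeriod k.2 l.2 hkl)
  rel_add_one k := by
    have iterate_add_one : f^[(k + 1 : Fin _)] x = f (f^[k] x) := by
      rw [Fin.val_add, Fin.val_one', Nat.add_mod_mod, iterate_mod_minimalPeriod_eq,
        iterate_succ_apply']
    simpa only [iterate_add_one] using hf (f^[k] x)

theorem periodicPts_nonempty [Finite α] [Nonempty α] (f : α → α) : (periodicPts f).Nonempty := by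
  obtain ⟨x⟩ := ‹Nonempty α›
  obtain ⟨m, n, hmn, heq⟩ := Set.finite_univ.exists_lt_map_eq_of_forall_mem
    (f := fun k : ℕ ↦ f^[k] x) fun _ ↦ Set.mem_univ _
  refine ⟨f^[m] x, mk_mem_periodicPts (Nat.sub_pos_of_lt hmn) ?_⟩
  rw [IsPeriodicPt, IsFixedPt, ← iterate_add_apply, Nat.sub_add_cancel hmn.le, heq]

theorem exists_isSimpleCycle_of_forall_exists_rel [Finite α] [Nonempty α] {r : α → α → Prop}
    (hr : ∀ x, ∃ y, r x y) : ∃ (s : ℕ) (_ : NeZero s) (c : Fin s → α), IsSimpleCycle r c := by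
  choose f hf using hr
  obtain ⟨x, hx⟩ := periodicPts_nonempty f
  have : NeZero (minimalPeriod f x) := ⟨(minimalPeriod_pos_of_mem_periodicPts hx).ne'⟩
  exact ⟨_, this, _, isSimpleCycle_iterate hf x⟩

theorem exists_isSimpleCycle_of_transGen_self [Finite α] {r : α → α → Prop} {a : α}
    (ha : TransGen r a a) : ∃ (s : ℕ) (_ : NeZero s) (c : Fin s → α), IsSimpleCycle r c := by
  have : Nonempty {x // TransGen r x a} := ⟨⟨a, ha⟩⟩
  have exists_succ (x : {x // TransGen r x a}) : ∃ y : {x // TransGen r x a}, r x y := by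
    obtain ⟨y, hxy, hya⟩ := TransGen.head'_iff.1 x.2
    exact ⟨⟨y, TransGen.trans_right hya ha⟩, hxy⟩
  obtain ⟨s, hs, c, hc⟩ := exists_isSimpleCycle_of_forall_exists_rel exists_succ
  exact ⟨s, hs, _, hc.map Subtype.val_injective fun _ _ h ↦ h⟩

theorem exists_height_of_forall_not_isSimpleCycle [Finite α] {r : α → α → Prop}
    (hr : ∀ (s : ℕ) [NeZero s] (c : Fin s → α), ¬ IsSimpleCycle r c) :
    ∃ h : α → ℕ, ∀ a b, r a b → h b < h a := by
  have not_transGen_self (a : α) : ¬ TransGen r a a := fun ha ↦ by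
    obtain ⟨s, _, c, hc⟩ := exists_isSimpleCycle_of_transGen_self ha
    exact hr s c hc
  refine ⟨fun a ↦ {x | TransGen r a x}.ncard, fun a b hab ↦ Set.ncard_lt_ncard ?_⟩
  exact ⟨fun x hbx ↦ TransGen.head hab hbx, fun hsub ↦ not_transGen_self b (hsub (.single hab))⟩

end SimpleCycle

section IsBinding

variable {ι K : Type*} [Mul K]

/-- The arc relation of the binding digraph of the system `L i j * v j ≤ v i`, `i ≠ j`: there is an
arc from `i` to `j` when that constraint holds with equality. -/
def IsBinding (L : ι → ι → K) (v : ι → K) (i j : ι) : Prop :=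
  i ≠ j ∧ v i = L i j * v j

instance instIrreflIsBinding (L : ι → ι → K) (v : ι → K) : Std.Irrefl (IsBinding L v) :=
  ⟨fun _ h ↦ h.1 rfl⟩

end IsBinding

section StrictSolution

variable {K : Type*} [Field K] [LinearOrder K] [IsStrictOrderedRing K]

theorem exists_pos_forall_mul_lt {κ : Type*} [Finite κ] {a b : κ → K} (ha : ∀ k, 0 ≤ a k)
    (hb : ∀ k, a k = 0 → b k < 0) : ∃ ε, 0 < ε ∧ ∀ k, ε * b k < a k := by
  have exists_pos_mul_lt_single (k : κ) : ∃ δ, 0 < δ ∧ δ * b k < a k := by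
    rcases (ha k).eq_or_lt' with hk | hk
    · exact ⟨1, one_pos, by simpa only [one_mul, hk] using hb k hk⟩
    · simpa only [mul_comm] using exists_pos_mul_lt hk (b k)
  choose δ hδ hδb using exists_pos_mul_lt_single
  obtain ⟨ε, hε, hεδ⟩ := Pi.exists_forall_pos_add_lt hδ
  refine ⟨ε, hε, fun k ↦ ?_⟩
  rcases lt_or_ge (b k) 0 with hbk | hbk
  · exact (mul_neg_of_pos_of_neg hε hbk).trans_le (ha k)
  · have ε_le : ε ≤ δ k := by simpa only [zero_add] using (hεδ k).le
    exact (mul_le_mul_of_nonneg_right ε_le hbk).trans_lt (hδb k)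

variable {ι : Type*} [Finite ι] {L : ι → ι → K} {v : ι → K}

theorem exists_strict_solution_of_height (hv : ∀ i, 0 < v i)
    (hfeas : ∀ i j, i ≠ j → L i j * v j ≤ v i) {h : ι → ℕ}
    (hh : ∀ i j, IsBinding L v i j → h j < h i) :
    ∃ w : ι → K, (∀ i, 0 < w i) ∧ ∀ i j, i ≠ j → L i j * w j < w i := by
  let slack (p : {p : ι × ι // p.1 ≠ p.2}) : K := v p.1.1 - L p.1.1 p.1.2 * v p.1.2
  let loss (p : {p : ι × ι // p.1 ≠ p.2}) : K :=
    L p.1.1 p.1.2 * (h p.1.2 * v p.1.2) - h p.1.1 * v p.1.1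
  have slack_nonneg p : 0 ≤ slack p := sub_nonneg.2 (hfeas _ _ p.2)
  have loss_neg p (hp : slack p = 0) : loss p < 0 := by
    obtain ⟨⟨i, j⟩, hij⟩ := p
    have binding : v i = L i j * v j := sub_eq_zero.1 hp
    have height_lt : (h j : K) < h i := Nat.cast_lt.2 (hh i j ⟨hij, binding⟩)
    calc L i j * (h j * v j) - h i * v i
        = h j * (L i j * v j) - h i * v i := by ring
      _ = (h j - h i) * v i := by rw [← binding]; ring
      _ < 0 := mul_neg_of_neg_of_pos (sub_neg.2 height_lt) (hv i)
  obtain ⟨ε, hε, hlt⟩ := exists_pos_forall_mul_lt slack_nonneg loss_neg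
  refine ⟨fun i ↦ (1 + ε * h i) * v i, fun i ↦ mul_pos (by positivity) (hv i), fun i j hij ↦ ?_⟩
  have loss_lt_slack : ε * (L i j * (h j * v j) - h i * v i) < v i - L i j * v j :=
    hlt ⟨(i, j), hij⟩
  linarith

theorem acyclic_binding_digraph_implies_strict_solution_general (i₀ : ι) (hv : ∀ i, 0 < v i)
    (hfeas : ∀ i j, i ≠ j → L i j * v j ≤ v i)
    (hacyclic : ∀ (s : ℕ) [NeZero s] (c : Fin s → ι), ¬ IsSimpleCycle (IsBinding L v) c) :
    ∃ v' : ι → K, (∀ i, 0 < v' i) ∧ v' i₀ = 1 ∧ ∀ i j, i ≠ j → L i j * v' j < v' i := by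
  obtain ⟨h, hh⟩ := exists_height_of_forall_not_isSimpleCycle hacyclic
  obtain ⟨w, hw, hstrict⟩ := exists_strict_solution_of_height hv hfeas hh
  refine ⟨fun i ↦ w i / w i₀, fun i ↦ div_pos (hw i) (hw i₀), div_self (hw i₀).ne',
    fun i j hij ↦ ?_⟩
  rw [← mul_div_assoc]
  exact div_lt_div_of_pos_right (hstrict i j hij) (hw i₀)

end StrictSolution

/-- If for z > 0 a feasible normalized positive vector v has an acyclic
binding-constraint digraph D(v,z), then there exists a feasible vector v'
for which all the constraints hold strictly. -/
theorem acyclic_binding_digraph_implies_strict_solution (n : ℕ) (hn : 0 < n)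
    (A : Fin n → Fin n → ℝ) (hpos : ∀ i j, 0 < A i j)
    (hrec : ∀ i j, A i j * A j i = 1)
    (z : ℝ) (hz : 0 < z)
    (v : Fin n → ℝ) (hv : ∀ j, 0 < v j) (hv1 : v ⟨0, hn⟩ = 1)
    (hfeas : ∀ i j : Fin n, i ≠ j →
      max (A i j - z) (1 / (A j i + z)) * v j ≤ v i)
    (hacyclic : ∀ (s : ℕ), 2 ≤ s → ∀ [NeZero s], ∀ c : Fin s → Fin n,
      Function.Injective c →
      ¬ ∀ k : Fin s, v (c k) =
          max (A (c k) (c (k + 1)) - z) (1 / (A (c (k + 1)) (c k) + z)) * v (c (k + 1))) :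
    ∃ v' : Fin n → ℝ, (∀ j, 0 < v' j) ∧ v' ⟨0, hn⟩ = 1 ∧
      ∀ i j : Fin n, i ≠ j →
        max (A i j - z) (1 / (A j i + z)) * v' j < v' i := by
  exact acyclic_binding_digraph_implies_strict_solution_general ⟨0, hn⟩ hv hfeas
    fun s _ c hc ↦ hacyclic s hc.two_le c hc.injective fun k ↦ (hc.rel_add_one k).2
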